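/- arXiv:1306.1368 — 2 statements merged into one kernel-verified Lean document; each statement's English description precedes it below -/
import Mathlib

section
/- Let p be a prime, V a d-dimensional vector space over 𝔽_p, h a linear automorphism of V of order k, and set h(k) = I + h + ⋯ + h^{k−1}. Then the following are equivalent: (i) there exists v ∈ V such that the affine transformation t_v h has order p·k; (ii) h(k) ≠ 0 as a linear endomorphism of V; (iii) the multiplicity of (X − 1) as a factor of the minimal polynomial of h over 𝔽_p equals (k)_p, the p-part of k (i.e. the minimal polynomial has the form (X − 1)^{(k)_p}·f(X) with f(X) coprime to X − 1). -/
open Polynomial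

/-!
Write `N = I + h + ⋯ + h^(k-1)`. The `k`-th power of `t_v h` is the translation by `N (h v)`, and
`k` divides the order of `t_v h`, so that order is `k` times the additive order of `N (h v)`; in
characteristic `p` the latter is `p` exactly when `N (h v) ≠ 0`.

On the polynomial side, `h` is a root of `X ^ k - 1 = (X - 1) * S`, where `S = 1 + X + ⋯ + X^(k-1)`
and `X ^ k - 1` has the root `1` with multiplicity `(k)_p`. The minimal polynomial divides
`(X - 1) * S`, so it fails to divide `S` only by having one more factor `X - 1` than `S` has.
-/

theorem orderOf_addRight {A : Type*} [AddGroup A] (a : A) :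
    orderOf (Equiv.addRight a : Equiv.Perm A) = addOrderOf a := by
  rw [← orderOf_ofAdd_eq_addOrderOf, orderOf_eq_orderOf_iff]
  intro n
  rw [← ofAdd_nsmul, ofAdd_eq_one, Equiv.ext_iff]
  simp only [Equiv.Perm.coe_pow, Equiv.coe_addRight, add_right_iterate, Equiv.Perm.one_apply,
    add_eq_left, forall_const]

theorem addOrderOf_eq_prime_iff_ne_zero (R : Type*) {M : Type*} [Semiring R] [AddCommMonoid M]
    [Module R M] {p : ℕ} [Fact p.Prime] [CharP R p] (u : M) : addOrderOf u = p ↔ u ≠ 0 := by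
  have hpu : p • u = 0 := by
    rw [← Nat.cast_smul_eq_nsmul R, CharP.cast_eq_zero, zero_smul]
  rw [addOrderOf_eq_prime_iff, and_iff_right hpu]

theorem orderOf_linearEquiv_toLinearMap {R M : Type*} [Semiring R] [AddCommMonoid M] [Module R M]
    (h : M ≃ₗ[R] M) : orderOf (h.toLinearMap : Module.End R M) = orderOf h :=
  orderOf_injective LinearEquiv.automorphismGroup.toLinearMapMonoidHom
    LinearEquiv.toLinearMap_injective h

section AffinePermutations

variable {R V : Type*} [Semiring R] [AddCommGroup V] [Module R V] (h : V ≃ₗ[R] V) (v : V)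

/-- The affine transformation `t_v h`, with the translation performed first, as a permutation of
the underlying set of the module. -/
def affinePerm : Equiv.Perm V :=
  (Equiv.addRight v).trans h.toEquiv

theorem affinePerm_apply (x : V) : affinePerm h v x = h (x + v) :=
  rfl

theorem eq_affinePerm_iff {g : Equiv.Perm V} : g = affinePerm h v ↔ ∀ x, g x = h (x + v) :=
  Equiv.ext_iff

theorem affinePerm_pow_apply (n : ℕ) (x : V) :
    (affinePerm h v ^ n) x = ((h.toLinearMap : Module.End R V) ^ n) x +
      (∑ i ∈ Finset.range n, (h.toLinearMap : Module.End R V) ^ i) (h v) := by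
  induction n generalizing x with
  | zero => simp
  | succ n ih =>
    rw [pow_succ, Equiv.Perm.mul_apply, ih, affinePerm_apply, map_add, map_add, pow_succ,
      Module.End.mul_apply, Finset.sum_range_succ, LinearMap.add_apply, LinearEquiv.coe_coe,
      add_assoc, add_comm (((h.toLinearMap : Module.End R V) ^ n) (h v))]

theorem orderOf_dvd_orderOf_affinePerm : orderOf h ∣ orderOf (affinePerm h v) := by
  set n := orderOf (affinePerm h v) with hn
  have pow_apply_add (x : V) : ((h.toLinearMap : Module.End R V) ^ n) x +
      (∑ i ∈ Finset.range n, (h.toLinearMap : Module.End R V) ^ i) (h v) = x := by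
    rw [← affinePerm_pow_apply, hn, pow_orderOf_eq_one, Equiv.Perm.one_apply]
  have translation_eq_zero :
      (∑ i ∈ Finset.range n, (h.toLinearMap : Module.End R V) ^ i) (h v) = 0 := by
    simpa only [map_zero, zero_add] using pow_apply_add 0
  rw [← orderOf_linearEquiv_toLinearMap]
  refine orderOf_dvd_of_pow_eq_one (LinearMap.ext fun x ↦ ?_)
  simpa only [translation_eq_zero, add_zero, Module.End.one_apply] using pow_apply_add x

theorem affinePerm_pow_orderOf : affinePerm h v ^ orderOf h = Equiv.addRight
    ((∑ i ∈ Finset.range (orderOf h), (h.toLinearMap : Module.End R V) ^ i) (h v)) := by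
  ext x
  rw [affinePerm_pow_apply, ← orderOf_linearEquiv_toLinearMap, pow_orderOf_eq_one,
    Module.End.one_apply, Equiv.coe_addRight]

theorem orderOf_affinePerm : orderOf (affinePerm h v) = orderOf h * addOrderOf
    ((∑ i ∈ Finset.range (orderOf h), (h.toLinearMap : Module.End R V) ^ i) (h v)) := by
  have hdvd := orderOf_dvd_orderOf_affinePerm h v
  rcases eq_or_ne (orderOf h) 0 with h0 | h0
  · rw [h0, zero_mul, ← zero_dvd_iff, ← h0]
    exact hdvd
  · rw [← orderOf_addRight, ← affinePerm_pow_orderOf, orderOf_pow_of_dvd h0 hdvd,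
      Nat.mul_div_cancel' hdvd]

theorem exists_orderOf_affinePerm_eq_iff {p : ℕ} [Fact p.Prime] [CharP R p]
    (hfin : IsOfFinOrder h) :
    (∃ v, orderOf (affinePerm h v) = p * orderOf h) ↔
      ∑ i ∈ Finset.range (orderOf h), (h.toLinearMap : Module.End R V) ^ i ≠ 0 := by
  simp only [orderOf_affinePerm, mul_comm p, Nat.mul_right_inj hfin.orderOf_pos.ne',
    addOrderOf_eq_prime_iff_ne_zero R]
  rw [← h.surjective.exists (p := fun w ↦
    (∑ i ∈ Finset.range (orderOf h), (h.toLinearMap : Module.End R V) ^ i) w ≠ 0)]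
  simp only [Ne, LinearMap.ext_iff, LinearMap.zero_apply, not_forall]

end AffinePermutations

section RootMultiplicity

variable {K : Type*} [Field K]

theorem dvd_iff_rootMultiplicity_le_of_dvd_X_sub_C_mul {m S : K[X]} {a : K} (hS : S ≠ 0)
    (hm : m ∣ (X - C a) * S) : m ∣ S ↔ m.rootMultiplicity a ≤ S.rootMultiplicity a := by
  refine ⟨fun hmS ↦ rootMultiplicity_le_rootMultiplicity_of_dvd hS hmS a, fun hle ↦ ?_⟩
  have hm0 : m ≠ 0 := ne_zero_of_dvd_ne_zero (mul_ne_zero (X_sub_C_ne_zero a) hS) hm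
  obtain ⟨f, hf, hndvd⟩ := exists_eq_pow_rootMultiplicity_mul_and_not_dvd m hm0 a
  have hcop : IsCoprime (X - C a) f := (irreducible_X_sub_C a).coprime_iff_not_dvd.2 hndvd
  have hfS : f ∣ S := hcop.symm.dvd_of_dvd_mul_left ((Dvd.intro_left _ hf.symm).trans hm)
  have hpowS : (X - C a) ^ m.rootMultiplicity a ∣ S :=
    (pow_dvd_pow _ hle).trans (pow_rootMultiplicity_dvd S a)
  rw [hf]
  exact hcop.pow_left.mul_dvd hpowS hfS

theorem rootMultiplicity_one_X_pow_sub_one_of_cast_ne_zero {m : ℕ} (hm : (m : K) ≠ 0) :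
    (X ^ m - 1 : K[X]).rootMultiplicity 1 = 1 := by
  have hsep : (X ^ m - 1 : K[X]).Separable := X_pow_sub_one_separable_iff.2 hm
  refine le_antisymm (rootMultiplicity_le_one_of_separable hsep 1) ?_
  exact (rootMultiplicity_pos hsep.ne_zero).2 (by simp)

theorem rootMultiplicity_one_X_pow_sub_one (p : ℕ) [Fact p.Prime] [CharP K p] {k : ℕ}
    (hk : k ≠ 0) : (X ^ k - 1 : K[X]).rootMultiplicity 1 = p ^ k.factorization p := by
  set a := k.factorization p
  set m := k / p ^ a
  have hm : (m : K) ≠ 0 := by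
    rw [Ne, CharP.cast_eq_zero_iff K p]
    exact Nat.not_dvd_ordCompl Fact.out hk
  have hexpand : (X ^ k - 1 : K[X]) = expand K (p ^ a) (X ^ m - 1) := by
    rw [map_sub, map_pow, expand_X, map_one, ← pow_mul, Nat.ordProj_mul_ordCompl_eq_self k p]
  rw [hexpand, rootMultiplicity_expand_pow, one_pow,
    rootMultiplicity_one_X_pow_sub_one_of_cast_ne_zero hm, mul_one]

theorem geom_sum_ne_zero_iff_rootMultiplicity_minpoly {A : Type*} [Ring A] [Algebra K A] (p : ℕ)
    [Fact p.Prime] [CharP K p] {x : A} {k : ℕ} (hk : k ≠ 0) (hx : x ^ k = 1) :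
    ∑ i ∈ Finset.range k, x ^ i ≠ 0 ↔
      (minpoly K x).rootMultiplicity 1 = p ^ k.factorization p := by
  set S : K[X] := ∑ i ∈ Finset.range k, X ^ i
  have hfactor : (X - C 1) * S = X ^ k - 1 := by rw [C_1, mul_geom_sum]
  have hP : (X ^ k - 1 : K[X]) ≠ 0 := (monic_X_pow_sub_C (1 : K) hk).ne_zero
  have hS : S ≠ 0 := right_ne_zero_of_mul (hfactor ▸ hP)
  have hdvd : minpoly K x ∣ X ^ k - 1 := minpoly.dvd K x (by simp [hx])
  have hmultP : (X ^ k - 1 : K[X]).rootMultiplicity 1 = p ^ k.factorization p :=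
    rootMultiplicity_one_X_pow_sub_one p hk
  have hmultS : 1 + S.rootMultiplicity 1 = p ^ k.factorization p := by
    rw [← hmultP, ← hfactor, rootMultiplicity_mul (hfactor ▸ hP), rootMultiplicity_X_sub_C_self]
  have hle : (minpoly K x).rootMultiplicity 1 ≤ p ^ k.factorization p :=
    hmultP ▸ rootMultiplicity_le_rootMultiplicity_of_dvd hP hdvd 1
  have haeval : ∑ i ∈ Finset.range k, x ^ i = aeval x S := by simp [S]
  rw [haeval, Ne, ← minpoly.dvd_iff,
    dvd_iff_rootMultiplicity_le_of_dvd_X_sub_C_mul hS (hfactor ▸ hdvd)]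
  omega

end RootMultiplicity

theorem affine_order_tfae_general (p : ℕ) [Fact p.Prime] {K V : Type*} [Field K] [CharP K p]
    [AddCommGroup V] [Module K V] (h : V ≃ₗ[K] V) (hfin : IsOfFinOrder h) (k : ℕ)
    (hk : orderOf h = k) :
    ((∃ (v : V) (g : Equiv.Perm V), (∀ x : V, g x = h (x + v)) ∧ orderOf g = p * k) ↔
      (∑ i ∈ Finset.range k, (h.toLinearMap : Module.End K V) ^ i) ≠ 0) ∧
    ((∑ i ∈ Finset.range k, (h.toLinearMap : Module.End K V) ^ i) ≠ 0 ↔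
      (minpoly K (h.toLinearMap : Module.End K V)).rootMultiplicity 1 =
        p ^ (k.factorization p)) := by
  subst hk
  constructor
  · simp only [← eq_affinePerm_iff, exists_eq_left]
    exact exists_orderOf_affinePerm_eq_iff h hfin
  · refine geom_sum_ne_zero_iff_rootMultiplicity_minpoly p hfin.orderOf_pos.ne' ?_
    rw [← orderOf_linearEquiv_toLinearMap, pow_orderOf_eq_one]

/-- With `k = orderOf h` and `h(k) = I + h + ⋯ + h^(k-1)`, the following are
equivalent: (i) some affine transformation `t_v h` has order `p * k`; (ii) `h(k) ≠ 0`;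
(iii) the multiplicity of `X - 1` in the minimal polynomial of `h` equals `(k)_p`,
the `p`-part of `k`. -/
theorem affine_order_tfae (p d : ℕ) [Fact p.Prime] (V : Type*) [AddCommGroup V]
    [Module (ZMod p) V] [Module.Finite (ZMod p) V]
    (hdim : Module.finrank (ZMod p) V = d)
    (h : V ≃ₗ[ZMod p] V) (k : ℕ) (hk : orderOf h = k) :
    ((∃ (v : V) (g : Equiv.Perm V), (∀ x : V, g x = h (x + v)) ∧ orderOf g = p * k) ↔
      (∑ i ∈ Finset.range k, (h.toLinearMap : Module.End (ZMod p) V) ^ i) ≠ 0) ∧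
    ((∑ i ∈ Finset.range k, (h.toLinearMap : Module.End (ZMod p) V) ^ i) ≠ 0 ↔
      (minpoly (ZMod p) (h.toLinearMap : Module.End (ZMod p) V)).rootMultiplicity 1 =
        p ^ (k.factorization p)) := by
  have : Finite V := Module.finite_of_finite (ZMod p)
  have : Finite (V ≃ₗ[ZMod p] V) := DFunLike.finite _
  exact affine_order_tfae_general p h (isOfFinOrder_of_finite h) k hk
end

section
/- Let p ≥ 5 be a prime, V a d-dimensional vector space over 𝔽_p with d ≥ 1, h a linear automorphism of V, v ∈ V, and let g = t_v h satisfy 4 · orderOf g ≥ p^d. Then one of the following holds: (1) V is a simple 𝔽_p[h]-module, orderOf h divides p^d − 1, 3 · orderOf h ≥ p^d − 1, and orderOf g = orderOf h; (2) d ≥ 2 and there exist h-invariant subspaces U, W with V = U ⊕ W, dim U = 1, h restricted to U the identity, W a simple 𝔽_p[h]-module, orderOf h dividing p^{d−1} − 1, 3 · orderOf h ≥ p^{d−1} − 1, and orderOf g = p · orderOf h; (3) d = 1, h = 1, v ≠ 0, and orderOf g = p; (4) d = 2 and there exist a nonzero scalar c ∈ 𝔽_p and a unipotent automorphism u ≠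 1 of V with h = c · u, 3 · orderOf c ≥ p − 1, and orderOf g = orderOf h = p · orderOf c. -/
/-!
Let `χ` be the characteristic polynomial of `h` and `q` the order of the field. If `(X - 1) * χ`
divides `X ^ N - 1`, then `χ` divides `1 + X + ⋯ + X ^ (N - 1)`, so both `h ^ N - 1` and
`(1 + h + ⋯ + h ^ (N - 1)) v` vanish and `g ^ N = 1`. Hence `orderOf g` divides the order of `X`
modulo `(X - 1) * χ`. This order is less than `q ^ d / 4` for most `χ`: coprime factors have unit
groups whose orders share the factor `q - 1 ≥ 4`, and a repeated factor replaces a factor of the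
order of size `q ^ deg` by a small power of the characteristic. The exceptions are `χ` irreducible,
`χ = (X - 1) * f` with `f` irreducible, `χ = X - 1` and `χ = (X - a) ^ 2`, which are the four cases.
-/

open Polynomial
open Module (finrank)

theorem add_three_le_pow_succ {q : ℕ} (hq : 3 ≤ q) (n : ℕ) : n + 3 ≤ q ^ (n + 1) := by
  have hn : n + 1 ≤ q ^ n := Nat.lt_pow_self (by omega)
  calc n + 3 ≤ (n + 1) * 3 := by omega
    _ ≤ q ^ n * q := by gcongr
    _ = q ^ (n + 1) := (pow_succ q n).symm

theorem four_mul_lt_pow_succ {m q : ℕ} (hq : 5 ≤ q) {k : ℕ} (hm : m ≤ q ^ k) :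
    4 * m < q ^ (k + 1) :=
  calc 4 * m ≤ 4 * q ^ k := by gcongr
    _ < q * q ^ k := by gcongr; omega
    _ = q ^ (k + 1) := (pow_succ' q k).symm

theorem pow_le_four_mul_of_pow_succ_le {m p q : ℕ} (hq : 0 < q) (hpq : p ≤ q) {k : ℕ}
    (hle : q ^ (k + 1) ≤ 4 * (p * m)) : q ^ k ≤ 4 * m := by
  refine Nat.le_of_mul_le_mul_left (c := q) ?_ hq
  calc q * q ^ k = q ^ (k + 1) := (pow_succ' q k).symm
    _ ≤ p * (4 * m) := by rwa [mul_left_comm]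
    _ ≤ q * (4 * m) := by gcongr

theorem sub_one_le_three_mul_of_dvd {m q : ℕ} (hq : 1 < q) (hdvd : m ∣ q - 1) (hle : q ≤ 4 * m) :
    q - 1 ≤ 3 * m := by
  obtain ⟨k, hk⟩ := hdvd
  have hk4 : k < 4 := by
    by_contra! hk4
    have := Nat.mul_le_mul_left m hk4
    omega
  calc q - 1 = m * k := hk
    _ ≤ m * 3 := by gcongr; omega
    _ = 3 * m := mul_comm m 3

section CommRing
variable {R : Type*} [CommRing R] {f g : R[X]}

/-- The order of `f` as in the theory of finite fields: the least `N > 0` such that `f` divides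
`X ^ N - 1`, and `0` if there is none. -/
noncomputable def polyOrder (f : R[X]) : ℕ := orderOf (AdjoinRoot.root f)

theorem polyOrder_dvd_iff {N : ℕ} : polyOrder f ∣ N ↔ f ∣ X ^ N - 1 := by
  rw [polyOrder, orderOf_dvd_iff_pow_eq_one, ← AdjoinRoot.mk_eq_zero, map_sub, map_pow, map_one,
    AdjoinRoot.mk_X, sub_eq_zero]

theorem dvd_X_pow_polyOrder_sub_one (f : R[X]) : f ∣ X ^ polyOrder f - 1 :=
  polyOrder_dvd_iff.1 dvd_rfl

theorem polyOrder_mul_of_isCoprime (hfg : IsCoprime f g) :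
    polyOrder (f * g) = (polyOrder f).lcm (polyOrder g) := by
  refine Nat.dvd_antisymm ?_ (Nat.lcm_dvd ?_ ?_)
  · exact polyOrder_dvd_iff.2 <| hfg.mul_dvd (polyOrder_dvd_iff.1 (Nat.dvd_lcm_left _ _))
      (polyOrder_dvd_iff.1 (Nat.dvd_lcm_right _ _))
  · exact polyOrder_dvd_iff.2 ((dvd_mul_right f g).trans (dvd_X_pow_polyOrder_sub_one _))
  · exact polyOrder_dvd_iff.2 ((dvd_mul_left g f).trans (dvd_X_pow_polyOrder_sub_one _))

theorem isUnit_root_of_isCoprime_X (hX : IsCoprime X f) : IsUnit (AdjoinRoot.root f) := by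
  obtain ⟨a, b, hab⟩ := hX
  refine IsUnit.of_mul_eq_one_right (AdjoinRoot.mk f a) ?_
  simpa using congrArg (AdjoinRoot.mk f) hab

theorem polyOrder_dvd_card_units (hX : IsCoprime X f) :
    polyOrder f ∣ Nat.card (AdjoinRoot f)ˣ := by
  obtain ⟨u, hu⟩ := isUnit_root_of_isCoprime_X hX
  rw [polyOrder, ← hu, orderOf_units]
  exact orderOf_dvd_natCard u

theorem monic_X_sub_one : (X - 1 : R[X]).Monic := by
  simpa using monic_X_sub_C (1 : R)

theorem isCoprime_X_X_sub_one : IsCoprime (X : R[X]) (X - 1) := ⟨1, -1, by ring⟩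

theorem polyOrder_X_sub_one : polyOrder (X - 1 : R[X]) = 1 :=
  Nat.dvd_one.1 (polyOrder_dvd_iff.2 (by simp))

theorem exists_eq_X_sub_C_of_natDegree_eq_one (hf : f.Monic) (hdeg : f.natDegree = 1) :
    ∃ a, f = X - C a :=
  ⟨-f.coeff 0, by rw [C_neg, sub_neg_eq_add]; exact hf.eq_X_add_C hdeg⟩

end CommRing

section FiniteField
variable {F : Type*} [Field F] {f g χ : F[X]}

theorem ne_zero_of_isCoprime_X (hX : IsCoprime X f) : f ≠ 0 := by
  rintro rfl
  exact not_isUnit_X (isCoprime_zero_right.1 hX)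

theorem irreducible_X_sub_one : Irreducible (X - 1 : F[X]) := by
  simpa using irreducible_X_sub_C (1 : F)

theorem natDegree_X_sub_one : (X - 1 : F[X]).natDegree = 1 := by
  simpa using natDegree_X_sub_C (1 : F)

theorem nontrivial_adjoinRoot_of_not_isUnit (hf : ¬ IsUnit f) : Nontrivial (AdjoinRoot f) :=
  AdjoinRoot.nontrivial f (mt isUnit_iff_degree_eq_zero.2 hf)

theorem exists_eq_pow_mul_isCoprime (hf : Irreducible f) (hfm : f.Monic) (hχ : χ.Monic) :
    ∃ (e : ℕ) (ρ : F[X]), ρ.Monic ∧ IsCoprime f ρ ∧ χ = f ^ e * ρ := by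
  obtain ⟨ρ, hχρ, hdvd⟩ := (FiniteMultiplicity.of_not_isUnit hf.not_isUnit
    hχ.ne_zero).exists_eq_pow_mul_and_not_dvd
  exact ⟨_, ρ, (hfm.pow _).of_mul_monic_left (hχρ ▸ hχ), hf.coprime_iff_not_dvd.2 hdvd, hχρ⟩

theorem natCard_adjoinRoot (hf : f ≠ 0) : Nat.card (AdjoinRoot f) = Nat.card F ^ f.natDegree := by
  have := (AdjoinRoot.powerBasis hf).finite
  rw [Module.natCard_eq_pow_finrank (K := F), (AdjoinRoot.powerBasis hf).finrank,
    AdjoinRoot.powerBasis_dim]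

theorem sub_one_dvd_natCard_units_adjoinRoot (hu : ¬ IsUnit f) :
    Nat.card F - 1 ∣ Nat.card (AdjoinRoot f)ˣ := by
  have := nontrivial_adjoinRoot_of_not_isUnit hu
  rw [← Nat.card_units]
  exact Subgroup.card_dvd_of_injective (Units.map (algebraMap F (AdjoinRoot f)).toMonoidHom)
    (Units.map_injective (algebraMap F (AdjoinRoot f)).injective)

theorem polyOrder_dvd_of_irreducible (hf : Irreducible f) (hX : IsCoprime X f) :
    polyOrder f ∣ Nat.card F ^ f.natDegree - 1 := by
  have : Fact (Irreducible f) := ⟨hf⟩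
  rw [← natCard_adjoinRoot hf.ne_zero, ← Nat.card_units]
  exact polyOrder_dvd_card_units hX

variable [Finite F]

theorem finite_adjoinRoot (hf : f ≠ 0) : Finite (AdjoinRoot f) :=
  have := (AdjoinRoot.powerBasis hf).finite
  Module.finite_of_finite F

theorem natCard_units_adjoinRoot_lt (hf : f ≠ 0) (hu : ¬ IsUnit f) :
    Nat.card (AdjoinRoot f)ˣ < Nat.card F ^ f.natDegree := by
  have := finite_adjoinRoot hf
  have := nontrivial_adjoinRoot_of_not_isUnit hu
  exact natCard_adjoinRoot hf ▸ natCard_units_lt (AdjoinRoot f)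

theorem polyOrder_pos (hX : IsCoprime X f) : 0 < polyOrder f := by
  have := finite_adjoinRoot (ne_zero_of_isCoprime_X hX)
  exact Nat.pos_of_dvd_of_pos (polyOrder_dvd_card_units hX) Nat.card_pos

theorem polyOrder_le (hX : IsCoprime X f) : polyOrder f ≤ Nat.card F ^ f.natDegree := by
  have hf := ne_zero_of_isCoprime_X hX
  have := finite_adjoinRoot hf
  exact natCard_adjoinRoot hf ▸ orderOf_le_card

theorem polyOrder_pow_dvd (f : F[X]) {e t : ℕ} (het : e ≤ Nat.card F ^ t) :
    polyOrder (f ^ e) ∣ polyOrder f * Nat.card F ^ t := by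
  have hpow : (X ^ (polyOrder f * Nat.card F ^ t) - 1 : F[X]) =
      (X ^ polyOrder f - 1) ^ Nat.card F ^ t := by
    have := Fintype.ofFinite F
    obtain ⟨p, _, n, hp, hn⟩ := FiniteField.card' F
    have : Fact p.Prime := ⟨hp⟩
    rw [Nat.card_eq_fintype_card, hn, ← pow_mul p, sub_pow_char_pow, one_pow, pow_mul]
  rw [polyOrder_dvd_iff, hpow]
  exact (pow_dvd_pow f het).trans (pow_dvd_pow_of_dvd (dvd_X_pow_polyOrder_sub_one f) _)

/-- `F[X]/(f)` and `F[X]/(g)` both contain `Fˣ`, so their unit groups have orders with the common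
factor `|F| - 1 ≥ 4`, which the lcm saves. -/
theorem four_mul_polyOrder_mul_lt (hq : 5 ≤ Nat.card F) (hX : IsCoprime X (f * g))
    (hfg : IsCoprime f g) (hf : ¬ IsUnit f) (hg : ¬ IsUnit g) :
    4 * polyOrder (f * g) < Nat.card F ^ (f * g).natDegree := by
  have hXf := hX.of_mul_right_left
  have hXg := hX.of_mul_right_right
  have hf0 := ne_zero_of_isCoprime_X hXf
  have hg0 := ne_zero_of_isCoprime_X hXg
  have := finite_adjoinRoot hf0
  set A := Nat.card (AdjoinRoot f)ˣ
  set B := Nat.card (AdjoinRoot g)ˣ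
  have hApos : 0 < A := Nat.card_pos
  have hgcd : 4 ≤ A.gcd B := by
    have := Nat.le_of_dvd (Nat.gcd_pos_of_pos_left B hApos) (Nat.dvd_gcd
      (sub_one_dvd_natCard_units_adjoinRoot hf) (sub_one_dvd_natCard_units_adjoinRoot hg))
    omega
  have hlcm : polyOrder (f * g) ∣ A.lcm B := by
    rw [polyOrder_mul_of_isCoprime hfg]
    exact Nat.lcm_dvd ((polyOrder_dvd_card_units hXf).trans (Nat.dvd_lcm_left A B))
      ((polyOrder_dvd_card_units hXg).trans (Nat.dvd_lcm_right A B))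
  have := finite_adjoinRoot hg0
  calc 4 * polyOrder (f * g)
      ≤ A.gcd B * A.lcm B :=
        Nat.mul_le_mul hgcd (Nat.le_of_dvd (Nat.lcm_pos hApos Nat.card_pos) hlcm)
    _ = A * B := Nat.gcd_mul_lcm A B
    _ < Nat.card F ^ f.natDegree * Nat.card F ^ g.natDegree :=
        Nat.mul_lt_mul'' (natCard_units_adjoinRoot_lt hf0 hf) (natCard_units_adjoinRoot_lt hg0 hg)
    _ = Nat.card F ^ (f * g).natDegree := by rw [natDegree_mul hf0 hg0, pow_add]

theorem polyOrder_pow_lt_of_irreducible (hf : Irreducible f) (hX : IsCoprime X f) {e t : ℕ}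
    (het : e ≤ Nat.card F ^ t) : polyOrder (f ^ e) < Nat.card F ^ (f.natDegree + t) := by
  have hq : 0 < Nat.card F := Nat.card_pos
  have hpos : 0 < Nat.card F ^ f.natDegree - 1 :=
    Nat.sub_pos_of_lt (Nat.one_lt_pow hf.natDegree_pos.ne' Finite.one_lt_card)
  have hdvd : polyOrder (f ^ e) ∣ (Nat.card F ^ f.natDegree - 1) * Nat.card F ^ t :=
    (polyOrder_pow_dvd f het).trans (mul_dvd_mul_right (polyOrder_dvd_of_irreducible hf hX) _)
  calc polyOrder (f ^ e) ≤ (Nat.card F ^ f.natDegree - 1) * Nat.card F ^ t :=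
        Nat.le_of_dvd (by positivity) hdvd
    _ < Nat.card F ^ f.natDegree * Nat.card F ^ t := by gcongr; omega
    _ = Nat.card F ^ (f.natDegree + t) := (pow_add _ _ _).symm

theorem four_mul_polyOrder_pow_lt (hq : 5 ≤ Nat.card F) (hf : Irreducible f) (hX : IsCoprime X f)
    {e : ℕ} (he : 2 ≤ e) (hne : ¬ (e = 2 ∧ f.natDegree = 1)) :
    4 * polyOrder (f ^ e) < Nat.card F ^ (e * f.natDegree) := by
  have hk := hf.natDegree_pos
  obtain ⟨t, het, hdeg⟩ :
      ∃ t, e ≤ Nat.card F ^ t ∧ f.natDegree + t + 1 ≤ e * f.natDegree := by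
    obtain ⟨m, rfl⟩ := Nat.exists_eq_add_of_le he
    rcases Nat.eq_or_lt_of_le hk with hk1 | hk2
    · obtain ⟨n, rfl⟩ : ∃ n, m = n + 1 := Nat.exists_eq_succ_of_ne_zero (by omega)
      exact ⟨n + 1, by linarith [add_three_le_pow_succ (by omega : 3 ≤ Nat.card F) n],
        by rw [← hk1]; omega⟩
    · have hm : m + 1 < Nat.card F ^ (m + 1) := Nat.lt_pow_self (by omega)
      exact ⟨m + 1, by omega, by nlinarith⟩
  calc 4 * polyOrder (f ^ e) < Nat.card F ^ (f.natDegree + t + 1) :=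
        four_mul_lt_pow_succ hq (polyOrder_pow_lt_of_irreducible hf hX het).le
    _ ≤ Nat.card F ^ (e * f.natDegree) := by gcongr; omega

theorem irreducible_or_eq_sq_or_four_mul_polyOrder_lt (hq : 5 ≤ Nat.card F) (hχ : χ.Monic)
    (hX : IsCoprime X χ) (hne : χ ≠ 1) :
    Irreducible χ ∨ (∃ a, χ = (X - C a) ^ 2) ∨ 4 * polyOrder χ < Nat.card F ^ χ.natDegree := by
  obtain ⟨f, hfm, hf, hfχ⟩ := exists_monic_irreducible_factor χ (mt hχ.isUnit_iff.1 hne)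
  obtain ⟨e, ρ, hρ, hcop, rfl⟩ := exists_eq_pow_mul_isCoprime hf hfm hχ
  have he : e ≠ 0 := by
    rintro rfl
    exact hf.not_isUnit (hcop.isUnit_of_dvd (by simpa using hfχ))
  by_cases hρ1 : ρ = 1
  · subst hρ1
    rw [mul_one] at hX ⊢
    have hXf : IsCoprime X f := (IsCoprime.pow_right_iff he.bot_lt).1 hX
    rcases eq_or_ne e 1 with rfl | he1
    · exact Or.inl (by simpa using hf)
    by_cases h21 : e = 2 ∧ f.natDegree = 1
    · obtain ⟨rfl, hdeg⟩ := h21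
      obtain ⟨a, rfl⟩ := exists_eq_X_sub_C_of_natDegree_eq_one hfm hdeg
      exact Or.inr (Or.inl ⟨a, rfl⟩)
    · rw [natDegree_pow]
      exact Or.inr (Or.inr (four_mul_polyOrder_pow_lt hq hf hXf (by omega) h21))
  · exact Or.inr <| Or.inr <| four_mul_polyOrder_mul_lt hq hX hcop.pow_left
      (mt (isUnit_pow_iff he).1 hf.not_isUnit) (mt hρ.isUnit_iff.1 hρ1)

theorem polyOrder_X_sub_one_pow_mul_le (hX : IsCoprime X f) (hcop : IsCoprime (X - 1) f) {e t : ℕ}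
    (het : e ≤ Nat.card F ^ t) :
    polyOrder ((X - 1) ^ e * f) ≤ Nat.card F ^ t * polyOrder f := by
  have hdvd : polyOrder ((X - 1 : F[X]) ^ e) ∣ Nat.card F ^ t := by
    have := polyOrder_pow_dvd (X - 1 : F[X]) het
    rwa [polyOrder_X_sub_one, one_mul] at this
  rw [polyOrder_mul_of_isCoprime hcop.pow_left]
  exact Nat.le_of_dvd (Nat.mul_pos (pow_pos Nat.card_pos t) (polyOrder_pos hX))
    (Nat.lcm_dvd (hdvd.mul_right _) (dvd_mul_left _ _))

theorem four_mul_polyOrder_X_sub_one_sq_mul_X_sub_C_sq_lt (hq : 5 ≤ Nat.card F) {a : F}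
    (hX : IsCoprime X (X - C a)) (hcop : IsCoprime (X - 1) (X - C a)) :
    4 * polyOrder ((X - 1) ^ 2 * (X - C a) ^ 2) < Nat.card F ^ 3 := by
  have hord : polyOrder ((X - 1) * (X - C a)) ∣ Nat.card F - 1 := by
    rw [polyOrder_mul_of_isCoprime hcop, polyOrder_X_sub_one, Nat.lcm_one_left]
    simpa using polyOrder_dvd_of_irreducible (irreducible_X_sub_C a) hX
  have hdvd : polyOrder ((X - 1) ^ 2 * (X - C a) ^ 2) ∣ (Nat.card F - 1) * Nat.card F ^ 1 := by
    rw [← mul_pow]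
    exact (polyOrder_pow_dvd _ (by rw [pow_one]; omega)).trans (mul_dvd_mul_right hord _)
  have := Nat.le_of_dvd (Nat.mul_pos (by omega) (by positivity)) hdvd
  calc 4 * polyOrder ((X - 1) ^ 2 * (X - C a) ^ 2)
      < Nat.card F * (Nat.card F * Nat.card F ^ 1) := by
        refine Nat.mul_lt_mul'' (by omega) (this.trans_lt ?_)
        gcongr
        omega
    _ = Nat.card F ^ 3 := by ring

theorem four_mul_polyOrder_X_sub_one_sq_mul_lt (hq : 5 ≤ Nat.card F) (hχ : χ.Monic)
    (hX : IsCoprime X χ) (hcop : IsCoprime (X - 1) χ) (hne : χ ≠ 1) (hirr : ¬ Irreducible χ) :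
    4 * polyOrder ((X - 1) ^ 2 * χ) < Nat.card F ^ (χ.natDegree + 1) := by
  rcases irreducible_or_eq_sq_or_four_mul_polyOrder_lt hq hχ hX hne with h | ⟨a, rfl⟩ | hlt
  · exact absurd h hirr
  · rw [natDegree_pow, natDegree_X_sub_C]
    exact four_mul_polyOrder_X_sub_one_sq_mul_X_sub_C_sq_lt hq
      ((IsCoprime.pow_right_iff two_pos).1 hX) ((IsCoprime.pow_right_iff two_pos).1 hcop)
  · calc 4 * polyOrder ((X - 1) ^ 2 * χ) ≤ 4 * (Nat.card F ^ 1 * polyOrder χ) := by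
          gcongr
          exact polyOrder_X_sub_one_pow_mul_le hX hcop (by rw [pow_one]; omega)
      _ = (4 * polyOrder χ) * Nat.card F := by ring
      _ < Nat.card F ^ χ.natDegree * Nat.card F := by gcongr
      _ = Nat.card F ^ (χ.natDegree + 1) := (pow_succ _ _).symm

theorem four_mul_polyOrder_X_sub_one_pow_add_three_mul_lt (hq : 5 ≤ Nat.card F)
    (hX : IsCoprime X f) (hcop : IsCoprime (X - 1) f) (n : ℕ) :
    4 * polyOrder ((X - 1) ^ (n + 3) * f) < Nat.card F ^ (f.natDegree + n + 2) := by
  refine four_mul_lt_pow_succ hq ?_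
  calc polyOrder ((X - 1) ^ (n + 3) * f)
      ≤ Nat.card F ^ (n + 1) * polyOrder f :=
        polyOrder_X_sub_one_pow_mul_le hX hcop (add_three_le_pow_succ (by omega) n)
    _ ≤ Nat.card F ^ (n + 1) * Nat.card F ^ f.natDegree := by gcongr; exact polyOrder_le hX
    _ = Nat.card F ^ (f.natDegree + n + 1) := by ring

theorem eq_or_irreducible_of_le_four_mul_polyOrder (hq : 5 ≤ Nat.card F) (hχ : χ.Monic)
    (hX : IsCoprime X χ) (hne : χ ≠ 1)
    (hle : Nat.card F ^ χ.natDegree ≤ 4 * polyOrder ((X - 1) * χ)) :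
    (Irreducible χ ∧ IsCoprime (X - 1) χ) ∨
    (∃ f, Irreducible f ∧ IsCoprime (X - 1) f ∧ χ = (X - 1) * f) ∨
    χ = X - 1 ∨
    (∃ a, χ = (X - C a) ^ 2 ∧ IsCoprime (X - 1) χ) := by
  obtain ⟨e, ρ, hρ, hcop, rfl⟩ :=
    exists_eq_pow_mul_isCoprime irreducible_X_sub_one monic_X_sub_one hχ
  have hXρ := hX.of_mul_right_right
  rw [(monic_X_sub_one.pow e).natDegree_mul hρ, natDegree_pow, natDegree_X_sub_one, mul_one,
    ← mul_assoc, ← pow_succ'] at hle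
  obtain rfl | rfl | ⟨n, rfl⟩ : e = 0 ∨ e = 1 ∨ ∃ n, e = n + 2 := by
    obtain _ | _ | n := e <;> simp
  · rw [pow_zero, one_mul] at hne ⊢
    rw [zero_add, zero_add, pow_one, polyOrder_mul_of_isCoprime hcop, polyOrder_X_sub_one,
      Nat.lcm_one_left] at hle
    rcases irreducible_or_eq_sq_or_four_mul_polyOrder_lt hq hρ hXρ hne with h | ⟨a, ha⟩ | hlt
    · exact Or.inl ⟨h, hcop⟩
    · exact Or.inr (Or.inr (Or.inr ⟨a, ha, hcop⟩))
    · exact absurd hle hlt.not_ge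
  · rw [pow_one]
    by_cases hρ1 : ρ = 1
    · exact Or.inr (Or.inr (Or.inl (by rw [hρ1, mul_one])))
    by_cases hirr : Irreducible ρ
    · exact Or.inr (Or.inl ⟨ρ, hirr, hcop, rfl⟩)
    · rw [add_comm 1] at hle
      exact absurd hle (four_mul_polyOrder_X_sub_one_sq_mul_lt hq hρ hXρ hcop hρ1 hirr).not_ge
  · rw [add_comm, ← add_assoc] at hle
    exact absurd hle (four_mul_polyOrder_X_sub_one_pow_add_three_mul_lt hq hXρ hcop n).not_ge

end FiniteField

section Affine
variable {R V : Type*} [Semiring R] [AddCommGroup V] [Module R V]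
  {h : V ≃ₗ[R] V} {v : V} {g : Equiv.Perm V}

theorem orderOf_toLinearMap (h : V ≃ₗ[R] V) : orderOf (h : Module.End R V) = orderOf h :=
  orderOf_injective LinearEquiv.automorphismGroup.toLinearMapMonoidHom
    LinearEquiv.toLinearMap_injective h

theorem toLinearMap_pow_eq_one_iff {N : ℕ} : (h : Module.End R V) ^ N = 1 ↔ h ^ N = 1 := by
  rw [← orderOf_dvd_iff_pow_eq_one, ← orderOf_dvd_iff_pow_eq_one, orderOf_toLinearMap]

theorem affine_pow_apply (hg : ∀ x, g x = h (x + v)) (N : ℕ) (x : V) :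
    (g ^ N) x = ((h : Module.End R V) ^ N) x +
      h ((∑ i ∈ Finset.range N, (h : Module.End R V) ^ i) v) := by
  induction N with
  | zero => simp
  | succ N ih =>
    rw [pow_succ', Equiv.Perm.mul_apply, ih, hg, geom_sum_succ, pow_succ']
    simp [add_assoc]

theorem affine_pow_eq_one_iff (hg : ∀ x, g x = h (x + v)) {N : ℕ} :
    g ^ N = 1 ↔ (h : Module.End R V) ^ N = 1 ∧
      (∑ i ∈ Finset.range N, (h : Module.End R V) ^ i) v = 0 := by
  refine ⟨fun hgN ↦ ?_, fun ⟨hN, hv⟩ ↦ Equiv.ext fun x ↦ by simp [affine_pow_apply hg, hN, hv]⟩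
  have happly (x : V) := affine_pow_apply hg N x
  rw [hgN] at happly
  have hv : (∑ i ∈ Finset.range N, (h : Module.End R V) ^ i) v = 0 := by
    simpa only [Equiv.Perm.one_apply, map_zero, zero_add, eq_comm (a := (0 : V)),
      LinearEquiv.map_eq_zero_iff] using happly 0
  exact ⟨LinearMap.ext fun x ↦ by simpa [hv, eq_comm] using happly x, hv⟩

theorem orderOf_dvd_orderOf_affine (hg : ∀ x, g x = h (x + v)) : orderOf h ∣ orderOf g := by
  rw [← orderOf_toLinearMap, orderOf_dvd_iff_pow_eq_one]
  exact ((affine_pow_eq_one_iff hg).1 (pow_orderOf_eq_one g)).1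

theorem orderOf_affine_eq_of_forall_fixed_eq_zero (hg : ∀ x, g x = h (x + v))
    (hfix : ∀ x, h x = x → x = 0) : orderOf g = orderOf h := by
  refine Nat.dvd_antisymm ?_ (orderOf_dvd_orderOf_affine hg)
  have hN := toLinearMap_pow_eq_one_iff.2 (pow_orderOf_eq_one h)
  rw [orderOf_dvd_iff_pow_eq_one, affine_pow_eq_one_iff hg]
  refine ⟨hN, hfix _ ?_⟩
  have hgeom := mul_geom_sum (h : Module.End R V) (orderOf h)
  rw [hN, sub_self] at hgeom
  simpa [sub_eq_zero] using LinearMap.congr_fun hgeom v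

theorem orderOf_affine_eq_or (p : ℕ) [Fact p.Prime] [CharP R p] (hg : ∀ x, g x = h (x + v)) :
    orderOf g = orderOf h ∨ orderOf g = p * orderOf h := by
  obtain ⟨w, hw⟩ : ∃ w, g ^ orderOf h = Equiv.addRight w :=
    ⟨_, Equiv.ext fun x ↦ by
      rw [affine_pow_apply hg, toLinearMap_pow_eq_one_iff.2 (pow_orderOf_eq_one h)]; rfl⟩
  have hpow : g ^ (orderOf h * p) = 1 := by
    have hpw : p • w = 0 := by rw [← Nat.cast_smul_eq_nsmul R, CharP.cast_eq_zero, zero_smul]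
    rw [pow_mul, hw, Equiv.nsmul_addRight, hpw, Equiv.addRight_zero]
  obtain ⟨k, hk⟩ := orderOf_dvd_orderOf_affine hg
  rcases (orderOf h).eq_zero_or_pos with h0 | hpos
  · exact Or.inl (by rw [hk, h0, zero_mul])
  · have hkp : k ∣ p := Nat.dvd_of_mul_dvd_mul_left hpos (hk ▸ orderOf_dvd_of_pow_eq_one hpow)
    rcases (Nat.dvd_prime Fact.out).1 hkp with rfl | rfl
    · exact Or.inl (by rw [hk, mul_one])
    · exact Or.inr (by rw [hk, mul_comm])

end Affine

section Aeval
variable {R V : Type*} [CommRing R] [AddCommGroup V] [Module R V] {f : R[X]}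

theorem orderOf_dvd_polyOrder {A : Type*} [Ring A] [Algebra R A] {a : A} (hf : aeval a f = 0) :
    orderOf a ∣ polyOrder f := by
  obtain ⟨k, hk⟩ := dvd_X_pow_polyOrder_sub_one f
  have := congrArg (aeval a) hk
  rw [map_mul, hf, zero_mul] at this
  exact orderOf_dvd_of_pow_eq_one (by simpa [sub_eq_zero] using this)

theorem orderOf_affine_dvd_polyOrder {h : V ≃ₗ[R] V} {v : V} {g : Equiv.Perm V}
    (hg : ∀ x, g x = h (x + v)) (hf : aeval (h : Module.End R V) f = 0) :
    orderOf g ∣ polyOrder ((X - 1) * f) := by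
  set N := polyOrder ((X - 1) * f)
  have hdvd : (X - 1) * f ∣ (X - 1) * ∑ i ∈ Finset.range N, X ^ i := by
    rw [mul_geom_sum]
    exact dvd_X_pow_polyOrder_sub_one _
  obtain ⟨k, hk⟩ := (monic_X_sub_C (1 : R)).isRegular.left.dvd_cancel_left.1 (by simpa using hdvd)
  have hgeom : ∑ i ∈ Finset.range N, (h : Module.End R V) ^ i = 0 := by
    have := congrArg (aeval (h : Module.End R V)) hk
    rw [map_mul, hf, zero_mul] at this
    simpa using this
  refine orderOf_dvd_of_pow_eq_one ((affine_pow_eq_one_iff hg).2 ⟨?_, by simp [hgeom]⟩)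
  rw [← sub_eq_zero, ← mul_geom_sum, hgeom, mul_zero]

theorem eq_zero_of_apply_eq_self {H : Module.End R V} (hcop : IsCoprime (X - 1) f)
    (hf : aeval H f = 0) {x : V} (hx : H x = x) : x = 0 := by
  obtain ⟨a, b, hab⟩ := hcop
  simpa [hf, hx] using (LinearMap.congr_fun (congrArg (aeval H) hab) x).symm

theorem aeval_restrict_apply {H : Module.End R V} {W : Submodule R V} (hW : ∀ x ∈ W, H x ∈ W)
    (f : R[X]) (x : W) : (aeval (H.restrict hW) f x : V) = aeval H f x := by
  induction f using Polynomial.induction_on' with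
  | add a b ha hb => simp [ha, hb]
  | monomial n a =>
    rw [aeval_monomial, aeval_monomial, Module.End.pow_restrict]
    rfl

theorem apply_mem_ker_aeval (H : Module.End R V) (f : R[X]) {x : V}
    (hx : x ∈ LinearMap.ker (aeval H f)) : H x ∈ LinearMap.ker (aeval H f) := by
  have hcomm : aeval H f * H = H * aeval H f := by
    simpa using congrArg (aeval H) (mul_comm f X)
  rw [LinearMap.mem_ker] at hx ⊢
  rw [← Module.End.mul_apply, hcomm, Module.End.mul_apply, hx, map_zero]

end Aeval

section VectorSpace
variable {F V : Type*} [Field F] [AddCommGroup V] [Module F V] [Module.Finite F V]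
  {H : Module.End F V} {a f : F[X]}

theorem natDegree_le_finrank_of_aeval_eq_zero [Nontrivial V] (hf : Irreducible f)
    (hHf : aeval H f = 0) : f.natDegree ≤ finrank F V := by
  have hassoc : Associated (minpoly F H) f :=
    (hf.dvd_iff.1 (minpoly.dvd F H hHf)).resolve_left (minpoly.not_isUnit F H) |>.symm
  have hdvd : f ∣ H.charpoly := hassoc.symm.dvd.trans H.minpoly_dvd_charpoly
  exact H.charpoly_natDegree ▸ natDegree_le_of_dvd hdvd H.charpoly_monic.ne_zero

theorem natDegree_le_finrank_of_le_ker_aeval (hf : Irreducible f) {W : Submodule F V}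
    (hW : ∀ x ∈ W, H x ∈ W) (hne : W ≠ ⊥) (hle : W ≤ LinearMap.ker (aeval H f)) :
    f.natDegree ≤ finrank F W := by
  have := Submodule.nontrivial_iff_ne_bot.2 hne
  refine natDegree_le_finrank_of_aeval_eq_zero (H := H.restrict hW) hf (LinearMap.ext fun x ↦ ?_)
  exact Subtype.ext ((aeval_restrict_apply hW f x).trans (hle x.2))

theorem eq_bot_or_eq_ker_aeval (hf : Irreducible f)
    (hker : finrank F (LinearMap.ker (aeval H f)) ≤ f.natDegree) {W : Submodule F V}
    (hle : W ≤ LinearMap.ker (aeval H f)) (hW : ∀ x ∈ W, H x ∈ W) :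
    W = ⊥ ∨ W = LinearMap.ker (aeval H f) :=
  or_iff_not_imp_left.2 fun hne ↦ Submodule.eq_of_le_of_finrank_le hle
    (hker.trans (natDegree_le_finrank_of_le_ker_aeval hf hW hne hle))

theorem eq_bot_or_eq_top_of_irreducible_charpoly (hirr : Irreducible H.charpoly)
    {W : Submodule F V} (hW : ∀ x ∈ W, H x ∈ W) : W = ⊥ ∨ W = ⊤ := by
  have htop : LinearMap.ker (aeval H H.charpoly) = ⊤ := by
    rw [H.aeval_self_charpoly]
    exact LinearMap.ker_zero
  have := eq_bot_or_eq_ker_aeval hirr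
    (by rw [htop, finrank_top, H.charpoly_natDegree]) (htop ▸ le_top) hW
  rwa [htop] at this

theorem ker_aeval_ne_bot_of_common_root {K : Type*} [Field K] [Algebra F K] {α : K}
    (hα : aeval α f = 0) (hchar : aeval α H.charpoly = 0) : LinearMap.ker (aeval H f) ≠ ⊥ := by
  have hroot : (H.baseChange K).charpoly.IsRoot α := by
    rwa [H.charpoly_baseChange, IsRoot, eval_map_algebraMap]
  obtain ⟨x, hx⟩ :=
    ((Module.End.hasEigenvalue_iff_isRoot_charpoly _ _).2 hroot).exists_hasEigenvector
  have hmap : Module.End.baseChangeHom F K V (aeval H f) =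
      aeval (H.baseChange K) (f.map (algebraMap F K)) := by
    rw [aeval_map_algebraMap, ← aeval_algHom_apply]
    rfl
  have hzero : aeval (H.baseChange K) (f.map (algebraMap F K)) x = 0 := by
    rw [Module.End.aeval_apply_of_hasEigenvector hx, eval_map_algebraMap, hα, zero_smul]
  intro hbot
  have hunit := ((LinearMap.isUnit_iff_ker_eq_bot _).2 hbot).map (Module.End.baseChangeHom F K V)
  rw [hmap, LinearMap.isUnit_iff_ker_eq_bot] at hunit
  exact hx.2 (LinearMap.ker_eq_bot'.1 hunit x hzero)

theorem ker_aeval_ne_bot (hf : Irreducible f) (hdvd : f ∣ H.charpoly) :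
    LinearMap.ker (aeval H f) ≠ ⊥ := by
  have : Fact (Irreducible f) := ⟨hf⟩
  have hroot : aeval (AdjoinRoot.root f) f = 0 := by rw [AdjoinRoot.aeval_eq, AdjoinRoot.mk_self]
  exact ker_aeval_ne_bot_of_common_root hroot (aeval_eq_zero_of_dvd_aeval_eq_zero hdvd hroot)

theorem isCoprime_X_charpoly (h : V ≃ₗ[F] V) : IsCoprime X (h : Module.End F V).charpoly := by
  refine irreducible_X.coprime_iff_not_dvd.2 fun hdvd ↦ ker_aeval_ne_bot irreducible_X hdvd ?_
  rw [aeval_X]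
  exact h.ker

theorem isCompl_ker_aeval_of_charpoly_eq_mul (hcop : IsCoprime a f)
    (hchar : H.charpoly = a * f) :
    IsCompl (LinearMap.ker (aeval H a)) (LinearMap.ker (aeval H f)) := by
  refine ⟨disjoint_ker_aeval_of_isCoprime H hcop, codisjoint_iff.2 ?_⟩
  rw [sup_ker_aeval_eq_ker_aeval_mul_of_coprime H hcop, ← hchar, H.aeval_self_charpoly]
  exact LinearMap.ker_zero

theorem finrank_ker_aeval_eq_natDegree (ha : Irreducible a) (hf : Irreducible f)
    (hcop : IsCoprime a f) (hchar : H.charpoly = a * f) :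
    finrank F (LinearMap.ker (aeval H a)) = a.natDegree ∧
      finrank F (LinearMap.ker (aeval H f)) = f.natDegree := by
  have hle {b : F[X]} (hb : Irreducible b) (hdvd : b ∣ H.charpoly) :
      b.natDegree ≤ finrank F (LinearMap.ker (aeval H b)) :=
    natDegree_le_finrank_of_le_ker_aeval hb (fun _ ↦ apply_mem_ker_aeval H b)
      (ker_aeval_ne_bot hb hdvd) le_rfl
  have hale := hle ha (hchar ▸ dvd_mul_right a f)
  have hfle := hle hf (hchar ▸ dvd_mul_left f a)
  have hsum := Submodule.finrank_add_eq_of_isCompl (isCompl_ker_aeval_of_charpoly_eq_mul hcop hchar)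
  have hdeg := H.charpoly_natDegree
  rw [hchar, natDegree_mul ha.ne_zero hf.ne_zero] at hdeg
  omega

end VectorSpace

section Order

theorem char_dvd_natCard (F : Type*) [Ring F] [Finite F] (p : ℕ) [CharP F p] : p ∣ Nat.card F := by
  have := Fintype.ofFinite F
  rw [← CharP.cast_eq_zero_iff F, Nat.card_eq_fintype_card, Nat.cast_card_eq_zero]

theorem char_le_natCard (F : Type*) [Ring F] [Finite F] (p : ℕ) [CharP F p] : p ≤ Nat.card F :=
  Nat.le_of_dvd Nat.card_pos (char_dvd_natCard F p)

theorem orderOf_dvd_natCard_sub_one {F : Type*} [Field F] [Finite F] {c : F} (hc : c ≠ 0) :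
    orderOf c ∣ Nat.card F - 1 := by
  rw [← Nat.card_units, ← Units.val_mk0 hc, orderOf_units]
  exact orderOf_dvd_natCard _

theorem orderOf_eq_char_of_sub_one_pow_eq_zero {A : Type*} [Ring A] (p : ℕ) [Fact p.Prime]
    [CharP A p] {u : A} {n : ℕ} (hn : n ≤ p) (hu : (u - 1) ^ n = 0) (hne : u ≠ 1) :
    orderOf u = p := by
  refine orderOf_eq_prime ?_ hne
  rw [← sub_eq_zero, ← one_pow p, ← sub_pow_char_of_commute p (Commute.one_right u)]
  exact pow_eq_zero_of_le hn hu

theorem orderOf_algebraMap {F A : Type*} [Field F] [Ring A] [Nontrivial A] [Algebra F A] (c : F) :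
    orderOf (algebraMap F A c) = orderOf c :=
  orderOf_injective (algebraMap F A).toMonoidHom (algebraMap F A).injective c

theorem orderOf_smul_of_sub_one_pow_eq_zero {F A : Type*} [Field F] [Finite F] [Ring A]
    [Nontrivial A] [Algebra F A] (p : ℕ) [Fact p.Prime] [CharP F p] {c : F} (hc : c ≠ 0) {u : A}
    {n : ℕ} (hn : n ≤ p) (hu : (u - 1) ^ n = 0) (hne : u ≠ 1) :
    orderOf (c • u) = p * orderOf c := by
  have : CharP A p := charP_of_injective_algebraMap (algebraMap F A).injective p
  have hup := orderOf_eq_char_of_sub_one_pow_eq_zero p hn hu hne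
  have hcop : (orderOf c).Coprime p := by
    refine Nat.Coprime.of_dvd (orderOf_dvd_natCard_sub_one hc) (char_dvd_natCard F p) ?_
    exact (Nat.coprime_self_sub_left Nat.card_pos).2 (Nat.coprime_one_left _)
  have hcomm : Commute (algebraMap F A c) u := Algebra.commutes c u
  rw [Algebra.smul_def, hcomm.orderOf_mul_eq_mul_orderOf_of_coprime (by
    rwa [orderOf_algebraMap, hup]), orderOf_algebraMap, hup, mul_comm]

theorem exists_unipotent_of_sub_algebraMap_pow_eq_zero {F V : Type*} [Field F] [AddCommGroup V]
    [Module F V] {h : V ≃ₗ[F] V} {c : F} (hc : c ≠ 0) {n : ℕ}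
    (hpow : ((h : Module.End F V) - algebraMap F _ c) ^ n = 0) :
    ∃ u : V ≃ₗ[F] V, ((u : Module.End F V) - 1) ^ n = 0 ∧
      (h : Module.End F V) = c • (u : Module.End F V) := by
  let u := h.trans (LinearEquiv.smulOfNeZero F V c⁻¹ (inv_ne_zero hc))
  have hu : (u : Module.End F V) = c⁻¹ • (h : Module.End F V) := rfl
  have hsub : (u : Module.End F V) - 1 = c⁻¹ • ((h : Module.End F V) - algebraMap F _ c) := by
    rw [smul_sub, Algebra.algebraMap_eq_smul_one, inv_smul_smul₀ hc, hu]
  exact ⟨u, by rw [hsub, _root_.smul_pow, hpow, smul_zero], by rw [hu, smul_inv_smul₀ hc]⟩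

end Order

section CharpolyCases
variable {F V : Type*} [Field F] [AddCommGroup V] [Module F V] [Module.Finite F V]
  {h : V ≃ₗ[F] V} {v : V} {g : Equiv.Perm V} {f : F[X]}

theorem charpoly_ne_one [Nontrivial V] (H : Module.End F V) : H.charpoly ≠ 1 := by
  intro h1
  have hrank := H.charpoly_natDegree
  rw [h1, natDegree_one] at hrank
  exact Module.finrank_pos.ne hrank

theorem ne_zero_of_isRoot_charpoly {c : F} (hroot : (h : Module.End F V).charpoly.IsRoot c) :
    c ≠ 0 := by
  rintro rfl
  refine irreducible_X.coprime_iff_not_dvd.1 (isCoprime_X_charpoly h) ?_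
  simpa using dvd_iff_isRoot.2 hroot

theorem orderOf_affine_eq_of_isCoprime_charpoly (hg : ∀ x, g x = h (x + v))
    (hcop : IsCoprime (X - 1) (h : Module.End F V).charpoly) : orderOf g = orderOf h :=
  orderOf_affine_eq_of_forall_fixed_eq_zero hg fun _ ↦
    eq_zero_of_apply_eq_self hcop (LinearMap.aeval_self_charpoly _)

theorem orderOf_dvd_of_irreducible_charpoly (hirr : Irreducible (h : Module.End F V).charpoly) :
    orderOf h ∣ Nat.card F ^ finrank F V - 1 := by
  rw [← orderOf_toLinearMap, ← (h : Module.End F V).charpoly_natDegree]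
  exact (orderOf_dvd_polyOrder (LinearMap.aeval_self_charpoly _)).trans
    (polyOrder_dvd_of_irreducible hirr (isCoprime_X_charpoly h))

theorem finrank_eq_of_charpoly_eq_X_sub_one_mul (hf : f ≠ 0)
    (hchar : (h : Module.End F V).charpoly = (X - 1) * f) :
    finrank F V = f.natDegree + 1 := by
  rw [← (h : Module.End F V).charpoly_natDegree, hchar,
    natDegree_mul monic_X_sub_one.ne_zero hf, natDegree_X_sub_one, add_comm]

theorem orderOf_dvd_of_charpoly_eq_X_sub_one_mul (hf : Irreducible f)
    (hcop : IsCoprime (X - 1) f) (hchar : (h : Module.End F V).charpoly = (X - 1) * f) :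
    orderOf h ∣ Nat.card F ^ f.natDegree - 1 := by
  have hX : IsCoprime X f := (hchar ▸ isCoprime_X_charpoly h).of_mul_right_right
  have hdvd := orderOf_dvd_polyOrder (LinearMap.aeval_self_charpoly (h : Module.End F V))
  rw [orderOf_toLinearMap, hchar, polyOrder_mul_of_isCoprime hcop, polyOrder_X_sub_one,
    Nat.lcm_one_left] at hdvd
  exact hdvd.trans (polyOrder_dvd_of_irreducible hf hX)

theorem exists_isCompl_of_charpoly_eq_X_sub_one_mul (hf : Irreducible f)
    (hcop : IsCoprime (X - 1) f) (hchar : (h : Module.End F V).charpoly = (X - 1) * f) :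
    ∃ U W : Submodule F V,
      (∀ x ∈ U, h x ∈ U) ∧ (∀ x ∈ W, h x ∈ W) ∧ IsCompl U W ∧
      finrank F U = 1 ∧ (∀ x ∈ U, h x = x) ∧
      (W ≠ ⊥ ∧ ∀ W' : Submodule F V, W' ≤ W → (∀ x ∈ W', h x ∈ W') → W' = ⊥ ∨ W' = W) := by
  obtain ⟨hU, hW⟩ := finrank_ker_aeval_eq_natDegree irreducible_X_sub_one hf hcop hchar
  refine ⟨_, _, fun _ ↦ apply_mem_ker_aeval _ _, fun _ ↦ apply_mem_ker_aeval _ _,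
    isCompl_ker_aeval_of_charpoly_eq_mul hcop hchar, hU.trans natDegree_X_sub_one, fun x hx ↦ ?_,
    ker_aeval_ne_bot hf (hchar ▸ dvd_mul_left f _), fun _ ↦ eq_bot_or_eq_ker_aeval hf hW.le⟩
  simpa [sub_eq_zero] using hx

theorem translation_of_charpoly_eq_X_sub_one (p : ℕ) [Fact p.Prime] [CharP F p]
    (hq : 5 ≤ Nat.card F) (hg : ∀ x, g x = h (x + v))
    (hord : Nat.card F ^ finrank F V ≤ 4 * orderOf g)
    (hchar : (h : Module.End F V).charpoly = X - 1) :
    finrank F V = 1 ∧ h = 1 ∧ v ≠ 0 ∧ orderOf g = p := by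
  have hrank : finrank F V = 1 := by
    rw [← (h : Module.End F V).charpoly_natDegree, hchar, natDegree_X_sub_one]
  have hh : h = 1 := by
    have hzero : (h : Module.End F V) - 1 = 0 := by
      rw [← LinearMap.aeval_self_charpoly (h : Module.End F V), hchar, map_sub, aeval_X, map_one]
    exact LinearEquiv.toLinearMap_injective (sub_eq_zero.1 hzero)
  have hgp : orderOf g = p := by
    rw [hrank, pow_one] at hord
    have hor := orderOf_affine_eq_or (R := F) p hg
    rw [hh, orderOf_one, mul_one] at hor
    exact hor.resolve_left (by omega)
  refine ⟨hrank, hh, ?_, hgp⟩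
  rintro rfl
  have hg1 : g = 1 := Equiv.ext fun x ↦ by simp [hg, hh]
  exact (Fact.out : p.Prime).ne_one (by rw [← hgp, hg1, orderOf_one])

variable [Finite F]

theorem pow_finrank_le_four_mul_polyOrder (hg : ∀ x, g x = h (x + v))
    (hord : Nat.card F ^ finrank F V ≤ 4 * orderOf g) :
    Nat.card F ^ (h : Module.End F V).charpoly.natDegree ≤
      4 * polyOrder ((X - 1) * (h : Module.End F V).charpoly) := by
  have hpos : 0 < polyOrder ((X - 1) * (h : Module.End F V).charpoly) :=
    polyOrder_pos (isCoprime_X_X_sub_one.mul_right (isCoprime_X_charpoly h))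
  rw [LinearMap.charpoly_natDegree]
  exact hord.trans (Nat.mul_le_mul_left 4 (Nat.le_of_dvd hpos
    (orderOf_affine_dvd_polyOrder hg (LinearMap.aeval_self_charpoly _))))

theorem singer_of_irreducible_charpoly [Nontrivial V] (hg : ∀ x, g x = h (x + v))
    (hord : Nat.card F ^ finrank F V ≤ 4 * orderOf g)
    (hirr : Irreducible (h : Module.End F V).charpoly)
    (hcop : IsCoprime (X - 1) (h : Module.End F V).charpoly) :
    (∀ W : Submodule F V, (∀ x ∈ W, h x ∈ W) → W = ⊥ ∨ W = ⊤) ∧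
      orderOf h ∣ Nat.card F ^ finrank F V - 1 ∧
      Nat.card F ^ finrank F V - 1 ≤ 3 * orderOf h ∧ orderOf g = orderOf h := by
  have hgh := orderOf_affine_eq_of_isCoprime_charpoly hg hcop
  have hdvd := orderOf_dvd_of_irreducible_charpoly hirr
  refine ⟨fun W ↦ eq_bot_or_eq_top_of_irreducible_charpoly hirr, hdvd, ?_, hgh⟩
  exact sub_one_le_three_mul_of_dvd
    (Nat.one_lt_pow Module.finrank_pos.ne' Finite.one_lt_card) hdvd (hgh ▸ hord)

theorem fixed_line_add_singer_of_charpoly_eq (p : ℕ) [Fact p.Prime] [CharP F p]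
    (hq : 5 ≤ Nat.card F) (hg : ∀ x, g x = h (x + v))
    (hord : Nat.card F ^ finrank F V ≤ 4 * orderOf g) (hf : Irreducible f)
    (hcop : IsCoprime (X - 1) f) (hchar : (h : Module.End F V).charpoly = (X - 1) * f) :
    2 ≤ finrank F V ∧ ∃ U W : Submodule F V,
      (∀ x ∈ U, h x ∈ U) ∧ (∀ x ∈ W, h x ∈ W) ∧ IsCompl U W ∧
      finrank F U = 1 ∧ (∀ x ∈ U, h x = x) ∧
      (W ≠ ⊥ ∧ ∀ W' : Submodule F V, W' ≤ W → (∀ x ∈ W', h x ∈ W') → W' = ⊥ ∨ W' = W) ∧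
      orderOf h ∣ Nat.card F ^ (finrank F V - 1) - 1 ∧
      Nat.card F ^ (finrank F V - 1) - 1 ≤ 3 * orderOf h ∧ orderOf g = p * orderOf h := by
  have hrank := finrank_eq_of_charpoly_eq_X_sub_one_mul hf.ne_zero hchar
  have hdvd := orderOf_dvd_of_charpoly_eq_X_sub_one_mul hf hcop hchar
  have hpos := hf.natDegree_pos
  have hlt : 1 < Nat.card F ^ f.natDegree := Nat.one_lt_pow hpos.ne' Finite.one_lt_card
  rw [hrank] at hord ⊢
  have hgh : orderOf g = p * orderOf h :=
    (orderOf_affine_eq_or (R := F) p hg).resolve_left fun hgh ↦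
      (four_mul_lt_pow_succ hq ((Nat.le_of_dvd (Nat.sub_pos_of_lt hlt) hdvd).trans
        (Nat.sub_le _ _))).not_ge (hgh ▸ hord)
  have hle : Nat.card F ^ f.natDegree ≤ 4 * orderOf h :=
    pow_le_four_mul_of_pow_succ_le Nat.card_pos (char_le_natCard F p) (hgh ▸ hord)
  obtain ⟨U, W, hU, hW, hUW, hU1, hfix, hsimple⟩ :=
    exists_isCompl_of_charpoly_eq_X_sub_one_mul hf hcop hchar
  exact ⟨by omega, U, W, hU, hW, hUW, hU1, hfix, hsimple, hdvd,
    sub_one_le_three_mul_of_dvd hlt hdvd hle, hgh⟩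

theorem scaled_unipotent_of_charpoly_eq_sq (p : ℕ) [Fact p.Prime] [CharP F p]
    (hq : 5 ≤ Nat.card F) (hg : ∀ x, g x = h (x + v))
    (hord : Nat.card F ^ finrank F V ≤ 4 * orderOf g) {c : F}
    (hchar : (h : Module.End F V).charpoly = (X - C c) ^ 2)
    (hcop : IsCoprime (X - 1) (h : Module.End F V).charpoly) :
    finrank F V = 2 ∧ c ≠ 0 ∧ ∃ u : V ≃ₗ[F] V,
      ((u : Module.End F V) - 1) ^ finrank F V = 0 ∧ u ≠ 1 ∧
      (h : Module.End F V) = c • (u : Module.End F V) ∧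
      Nat.card F - 1 ≤ 3 * orderOf c ∧ orderOf g = orderOf h ∧ orderOf h = p * orderOf c := by
  have hrank : finrank F V = 2 := by
    rw [← (h : Module.End F V).charpoly_natDegree, hchar, natDegree_pow, natDegree_X_sub_C]
  have : Nontrivial V := Module.nontrivial_of_finrank_pos (R := F) (by omega)
  have hc : c ≠ 0 := ne_zero_of_isRoot_charpoly (h := h) (by simp [hchar])
  have hpow : ((h : Module.End F V) - algebraMap F _ c) ^ 2 = 0 := by
    simpa [hchar] using LinearMap.aeval_self_charpoly (h : Module.End F V)
  obtain ⟨u, hu, hhu⟩ := exists_unipotent_of_sub_algebraMap_pow_eq_zero hc hpow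
  have hgh := orderOf_affine_eq_of_isCoprime_charpoly hg hcop
  have hcdvd := orderOf_dvd_natCard_sub_one hc
  rw [hrank] at hord ⊢
  have hu1 : u ≠ 1 := by
    rintro rfl
    have hhc : orderOf h = orderOf c := by
      rw [← orderOf_toLinearMap, hhu, ← orderOf_algebraMap (A := Module.End F V) c,
        Algebra.algebraMap_eq_smul_one]
      rfl
    have hle : orderOf c ≤ Nat.card F ^ 1 := by
      rw [pow_one]
      exact (Nat.le_of_dvd (by omega) hcdvd).trans (Nat.sub_le _ _)
    exact (four_mul_lt_pow_succ hq hle).not_ge (by rwa [← hhc, ← hgh])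
  have hhc : orderOf h = p * orderOf c := by
    rw [← orderOf_toLinearMap, hhu]
    exact orderOf_smul_of_sub_one_pow_eq_zero p hc (Fact.out : p.Prime).two_le hu
      fun hu' ↦ hu1 (LinearEquiv.toLinearMap_injective hu')
  refine ⟨rfl, hc, u, hu, hu1, hhu, ?_, hgh, hhc⟩
  refine sub_one_le_three_mul_of_dvd Finite.one_lt_card hcdvd ?_
  simpa using pow_le_four_mul_of_pow_succ_le (k := 1) Nat.card_pos (char_le_natCard F p)
    (by rwa [← hhc, ← hgh])

end CharpolyCases

theorem affine_large_order_classification_general (p : ℕ) {F : Type*} [Field F] [Finite F]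
    [CharP F p] (hq : 5 ≤ Nat.card F)
    {V : Type*} [AddCommGroup V] [Module F V] [Module.Finite F V] [Nontrivial V]
    (h : V ≃ₗ[F] V) (v : V) (g : Equiv.Perm V) (hg : ∀ x, g x = h (x + v))
    (hord : Nat.card F ^ finrank F V ≤ 4 * orderOf g) :
    ((∀ W : Submodule F V, (∀ x ∈ W, h x ∈ W) → W = ⊥ ∨ W = ⊤) ∧
      orderOf h ∣ Nat.card F ^ finrank F V - 1 ∧
      Nat.card F ^ finrank F V - 1 ≤ 3 * orderOf h ∧ orderOf g = orderOf h) ∨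
    (2 ≤ finrank F V ∧ ∃ U W : Submodule F V,
      (∀ x ∈ U, h x ∈ U) ∧ (∀ x ∈ W, h x ∈ W) ∧ IsCompl U W ∧
      finrank F U = 1 ∧ (∀ x ∈ U, h x = x) ∧
      (W ≠ ⊥ ∧ ∀ W' : Submodule F V, W' ≤ W → (∀ x ∈ W', h x ∈ W') → W' = ⊥ ∨ W' = W) ∧
      orderOf h ∣ Nat.card F ^ (finrank F V - 1) - 1 ∧
      Nat.card F ^ (finrank F V - 1) - 1 ≤ 3 * orderOf h ∧ orderOf g = p * orderOf h) ∨
    (finrank F V = 1 ∧ h = 1 ∧ v ≠ 0 ∧ orderOf g = p) ∨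
    (finrank F V = 2 ∧ ∃ c : F, c ≠ 0 ∧ ∃ u : V ≃ₗ[F] V,
      ((u : Module.End F V) - 1) ^ finrank F V = 0 ∧ u ≠ 1 ∧
      (h : Module.End F V) = c • (u : Module.End F V) ∧
      Nat.card F - 1 ≤ 3 * orderOf c ∧ orderOf g = orderOf h ∧ orderOf h = p * orderOf c) := by
  have : Fact p.Prime := ⟨CharP.char_is_prime F p⟩
  rcases eq_or_irreducible_of_le_four_mul_polyOrder hq (LinearMap.charpoly_monic _)
    (isCoprime_X_charpoly h) (charpoly_ne_one _) (pow_finrank_le_four_mul_polyOrder hg hord) with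
    ⟨hirr, hcop⟩ | ⟨f, hf, hcop, hchar⟩ | hchar | ⟨c, hchar, hcop⟩
  · exact Or.inl (singer_of_irreducible_charpoly hg hord hirr hcop)
  · exact Or.inr (Or.inl (fixed_line_add_singer_of_charpoly_eq p hq hg hord hf hcop hchar))
  · exact Or.inr (Or.inr (Or.inl (translation_of_charpoly_eq_X_sub_one p hq hg hord hchar)))
  · obtain ⟨hrank, hc, hu⟩ := scaled_unipotent_of_charpoly_eq_sq p hq hg hord hchar hcop
    exact Or.inr (Or.inr (Or.inr ⟨hrank, c, hc, hu⟩))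

/-- Classification of affine transformations `g = t_v h` of order at least
`p^d / 4` over `𝔽_p`, `p ≥ 5`: either (1) `h` is (a power of) a Singer cycle; or
(2) `h = J₁ ⊕ s` with `s` a Singer-type element on a hyperplane and `orderOf g = p * orderOf h`;
or (3) `d = 1`, `h = 1`, `g` a nontrivial translation; or (4) `d = 2` and `h = c • u`
with `c` a scalar of order at least `(p-1)/3` and `u ≠ 1` unipotent. -/
theorem affine_large_order_classification (p d : ℕ) [Fact p.Prime] (hp5 : 5 ≤ p)
    (hd1 : 1 ≤ d)
    (V : Type*) [AddCommGroup V] [Module (ZMod p) V] [Module.Finite (ZMod p) V]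
    (hdim : Module.finrank (ZMod p) V = d)
    (h : V ≃ₗ[ZMod p] V) (v : V)
    (g : Equiv.Perm V) (hg : ∀ x : V, g x = h (x + v))
    (hord : p ^ d ≤ 4 * orderOf g) :
    -- (1) Singer cycle case
    ((∀ W : Submodule (ZMod p) V, (∀ x ∈ W, h x ∈ W) → W = ⊥ ∨ W = ⊤) ∧
      orderOf h ∣ p ^ d - 1 ∧ p ^ d - 1 ≤ 3 * orderOf h ∧ orderOf g = orderOf h) ∨
    -- (2) `J₁ ⊕ s_{d-1}^i` case
    (2 ≤ d ∧ ∃ U W : Submodule (ZMod p) V,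
      (∀ x ∈ U, h x ∈ U) ∧ (∀ x ∈ W, h x ∈ W) ∧ IsCompl U W ∧
      Module.finrank (ZMod p) U = 1 ∧ (∀ x ∈ U, h x = x) ∧
      (W ≠ ⊥ ∧ ∀ W' : Submodule (ZMod p) V, W' ≤ W → (∀ x ∈ W', h x ∈ W') →
        W' = ⊥ ∨ W' = W) ∧
      orderOf h ∣ p ^ (d - 1) - 1 ∧ p ^ (d - 1) - 1 ≤ 3 * orderOf h ∧
      orderOf g = p * orderOf h) ∨
    -- (3) translation case
    (d = 1 ∧ h = 1 ∧ v ≠ 0 ∧ orderOf g = p) ∨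
    -- (4) `s₁^i ⊗ J₂` case
    (d = 2 ∧ ∃ (c : ZMod p), c ≠ 0 ∧ ∃ u : V ≃ₗ[ZMod p] V,
      ((u.toLinearMap : Module.End (ZMod p) V) - 1) ^ d = 0 ∧ u ≠ 1 ∧
      (h.toLinearMap : Module.End (ZMod p) V) = c • (u.toLinearMap : Module.End (ZMod p) V) ∧
      p - 1 ≤ 3 * orderOf c ∧ orderOf g = orderOf h ∧ orderOf h = p * orderOf c) := by
  subst hdim
  have : Nontrivial V := Module.nontrivial_of_finrank_pos (R := ZMod p) hd1
  simpa only [Nat.card_zmod] using affine_large_order_classification_general p (F := ZMod p)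
    (by rwa [Nat.card_zmod]) h v g hg (by rwa [Nat.card_zmod])
end
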